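/- Weaker non-conforming upper bound via the triangle inequality (Appendix): let ṽ ∈ L²(Ω;ℝ^N) and E := ∇û − A^{−1}ṽ. Then for every θ > 0, every v ∈ L²(Ω;ℝ^N) possessing a weak divergence div v ∈ L²₊₁(Ω), and every u ∈ L²₋₁(Ω) with weak gradient ∇u ∈ L²(Ω;ℝ^N) such that û − u ∈ H¹°₋₁(Ω), ‖E‖²_A ≤ (1 + 4/θ)(c_{N,α}‖f + div v‖_{L²₊₁(Ω)} + ‖A^{−1}(ṽ − v)‖_A)² + (4 + θ)‖∇u − A^{−1}ṽ‖²_A. -/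

import Mathlib

open MeasureTheory Filter Topology
open scoped RealInnerProductSpace

noncomputable section

/-- Euclidean space `ℝ^N`. -/
abbrev Euc (N : ℕ) := EuclideanSpace ℝ (Fin N)

/-- The Poincaré constant `c_N = 2/(N-2)`. -/
def cN (N : ℕ) : ℝ := 2 / ((N : ℝ) - 2)

variable {N : ℕ}

/-- Squared weighted `L²_s(Ω)` norm: `∫_Ω (1+|x|²)^s u(x)² dx`. -/
def sqL2 (Ω : Set (Euc N)) (s : ℝ) (u : Euc N → ℝ) : ℝ :=
  ∫ x in Ω, (1 + ‖x‖ ^ 2) ^ s * u x ^ 2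

/-- Weighted `L²_s(Ω)` norm. -/
def nrmL2 (Ω : Set (Euc N)) (s : ℝ) (u : Euc N → ℝ) : ℝ :=
  Real.sqrt (sqL2 Ω s u)

/-- Membership in the weighted space `L²_s(Ω)` (scalar functions). -/
def MemL2 (Ω : Set (Euc N)) (s : ℝ) (u : Euc N → ℝ) : Prop :=
  AEStronglyMeasurable u (volume.restrict Ω) ∧
    Integrable (fun x => (1 + ‖x‖ ^ 2) ^ s * u x ^ 2) (volume.restrict Ω)

/-- Squared weighted `L²_s(Ω;ℝ^N)` norm for vector fields. -/
def sqL2V (Ω : Set (Euc N)) (s : ℝ) (v : Euc N → Euc N) : ℝ :=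
  ∫ x in Ω, (1 + ‖x‖ ^ 2) ^ s * ‖v x‖ ^ 2

/-- Weighted `L²_s(Ω;ℝ^N)` norm for vector fields. -/
def nrmL2V (Ω : Set (Euc N)) (s : ℝ) (v : Euc N → Euc N) : ℝ :=
  Real.sqrt (sqL2V Ω s v)

/-- Membership in the weighted space `L²_s(Ω;ℝ^N)` (vector fields). -/
def MemL2V (Ω : Set (Euc N)) (s : ℝ) (v : Euc N → Euc N) : Prop :=
  AEStronglyMeasurable v (volume.restrict Ω) ∧
    Integrable (fun x => (1 + ‖x‖ ^ 2) ^ s * ‖v x‖ ^ 2) (volume.restrict Ω)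

/-- Test functions: `φ ∈ C_c^∞(Ω)`. -/
def IsTest (Ω : Set (Euc N)) (φ : Euc N → ℝ) : Prop :=
  ContDiff ℝ (⊤ : ℕ∞) φ ∧ HasCompactSupport φ ∧ tsupport φ ⊆ Ω

/-- `g` is the weak gradient of `u` on `Ω`:
`∫_Ω u ∇φ = −∫_Ω φ g` for all test functions `φ`. -/
def IsWeakGrad (Ω : Set (Euc N)) (u : Euc N → ℝ) (g : Euc N → Euc N) : Prop :=
  ∀ φ : Euc N → ℝ, IsTest Ω φ →
    (∫ x in Ω, u x • gradient φ x) = - ∫ x in Ω, φ x • g x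

/-- `d` is the weak divergence of the vector field `v` on `Ω`:
`∫_Ω v·∇φ = −∫_Ω d φ` for all test functions `φ`. -/
def IsWeakDiv (Ω : Set (Euc N)) (v : Euc N → Euc N) (d : Euc N → ℝ) : Prop :=
  ∀ φ : Euc N → ℝ, IsTest Ω φ →
    (∫ x in Ω, ⟪v x, gradient φ x⟫) = - ∫ x in Ω, d x * φ x

/-- `u ∈ H¹°₋₁(Ω)` with weak gradient `g`: `u ∈ L²₋₁(Ω)`, `g ∈ L²(Ω;ℝ^N)` is the weak
gradient of `u`, and `u` is approximated by test functions in the natural norms. -/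
def MemH10 (Ω : Set (Euc N)) (u : Euc N → ℝ) (g : Euc N → Euc N) : Prop :=
  MemL2 Ω (-1) u ∧ MemL2V Ω 0 g ∧ IsWeakGrad Ω u g ∧
    ∃ φ : ℕ → Euc N → ℝ, (∀ n, IsTest Ω (φ n)) ∧
      Tendsto (fun n => nrmL2 Ω (-1) (fun x => u x - φ n x)) atTop (𝓝 0) ∧
      Tendsto (fun n => nrmL2V Ω 0 (fun x => g x - gradient (φ n) x)) atTop (𝓝 0)

/-- `g ∈ 𝒢`, the closure in `L²(Ω;ℝ^N)` of `{∇φ : φ ∈ C_c^∞(Ω)}`. -/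
def MemG (Ω : Set (Euc N)) (g : Euc N → Euc N) : Prop :=
  MemL2V Ω 0 g ∧
    ∃ φ : ℕ → Euc N → ℝ, (∀ n, IsTest Ω (φ n)) ∧
      Tendsto (fun n => nrmL2V Ω 0 (fun x => g x - gradient (φ n) x)) atTop (𝓝 0)

/-- `ψ ∈ D₀`, the set of weakly divergence-free fields in `L²(Ω;ℝ^N)`. -/
def MemD0 (Ω : Set (Euc N)) (ψ : Euc N → Euc N) : Prop :=
  MemL2V Ω 0 ψ ∧
    ∀ φ : Euc N → ℝ, IsTest Ω φ → (∫ x in Ω, ⟪ψ x, gradient φ x⟫) = 0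

/-- The coefficient matrix field `A : Ω → ℝ^{N×N}`: measurable, essentially bounded,
symmetric, and uniformly coercive (`A(x)ξ·ξ ≥ α⁻²|ξ|²` for a.e. `x ∈ Ω`). -/
structure Coeff (N : ℕ) (Ω : Set (Euc N)) where
  A : Euc N → Euc N →L[ℝ] Euc N
  α : ℝ
  α_pos : 0 < α
  meas : ∀ ξ : Euc N, AEStronglyMeasurable (fun x => A x ξ) (volume.restrict Ω)
  bdd : ∃ C : ℝ, ∀ᵐ x ∂(volume.restrict Ω), ∀ ξ : Euc N, ‖A x ξ‖ ≤ C * ‖ξ‖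
  symm : ∀ x : Euc N, ∀ ξ η : Euc N, ⟪A x ξ, η⟫ = ⟪ξ, A x η⟫
  coer : ∀ᵐ x ∂(volume.restrict Ω), ∀ ξ : Euc N, α⁻¹ ^ 2 * ‖ξ‖ ^ 2 ≤ ⟪A x ξ, ξ⟫

/-- The weighted inner product `⟨v,w⟩_A = ∫_Ω A v · w dx`. -/
def ipA (Ω : Set (Euc N)) (A : Euc N → Euc N →L[ℝ] Euc N) (v w : Euc N → Euc N) : ℝ :=
  ∫ x in Ω, ⟪A x (v x), w x⟫

/-- The squared `A`-weighted norm `‖v‖²_A = ∫_Ω A v · v dx`. -/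
def sqA (Ω : Set (Euc N)) (A : Euc N → Euc N →L[ℝ] Euc N) (v : Euc N → Euc N) : ℝ :=
  ipA Ω A v v

/-- The `A`-weighted norm `‖v‖_A`. -/
def nrmA (Ω : Set (Euc N)) (A : Euc N → Euc N →L[ℝ] Euc N) (v : Euc N → Euc N) : ℝ :=
  Real.sqrt (sqA Ω A v)

/-- `w = A⁻¹ v` (a.e. on `Ω`), with `w ∈ L²(Ω;ℝ^N)`. -/
def IsAInv (Ω : Set (Euc N)) (A : Euc N → Euc N →L[ℝ] Euc N) (v w : Euc N → Euc N) : Prop :=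
  MemL2V Ω 0 w ∧ ∀ᵐ x ∂(volume.restrict Ω), A x (w x) = v x
lemma memV_iff {Ω : Set (Euc N)} {v : Euc N → Euc N} :
    MemL2V Ω 0 v ↔ MemLp v 2 (volume.restrict Ω) := by
  unfold MemL2V
  constructor
  · rintro ⟨h1, h2⟩
    rw [memLp_two_iff_integrable_sq_norm h1]
    simpa using h2
  · intro h
    refine ⟨h.1, ?_⟩
    have := (memLp_two_iff_integrable_sq_norm h.1).1 h
    simpa using this

lemma cs_disc {p q r : ℝ} (h : ∀ t : ℝ, 0 ≤ p + 2 * t * q + t ^ 2 * r) :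
    |q| ≤ Real.sqrt p * Real.sqrt r := by
  have h1 := discrim_le_zero (a := r) (b := 2 * q) (c := p) (fun t => by
    have := h t; nlinarith)
  have hp : 0 ≤ p := by simpa using h 0
  rw [discrim] at h1
  rw [← Real.sqrt_mul hp]
  apply Real.abs_le_sqrt
  nlinarith

lemma A_memLp {Ω : Set (Euc N)} (M : Coeff N Ω) {v : Euc N → Euc N}
    (hv : MemLp v 2 (volume.restrict Ω)) :
    MemLp (fun x => M.A x (v x)) 2 (volume.restrict Ω) := by
  obtain ⟨C, hC⟩ := M.bdd
  refine MemLp.of_le_mul (c := C) hv ?_ ?_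
  · have : (fun x => M.A x (v x)) =
        fun x => ∑ i, (v x i) • M.A x (EuclideanSpace.single i (1:ℝ)) := by
      funext x
      conv_lhs => rw [← (EuclideanSpace.basisFun (Fin N) ℝ).sum_repr (v x)]
      simp [map_sum]
    rw [this]
    refine Finset.aestronglyMeasurable_fun_sum _ (fun i _ => ?_)
    have hm : AEStronglyMeasurable (fun x => v x i) (volume.restrict Ω) :=
      (EuclideanSpace.proj i : Euc N →L[ℝ] ℝ).continuous.comp_aestronglyMeasurable hv.1
    exact hm.smul (M.meas _)
  · filter_upwards [hC] with x hx using hx _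

lemma inner_int {Ω : Set (Euc N)} {v w : Euc N → Euc N}
    (hv : MemLp v 2 (volume.restrict Ω)) (hw : MemLp w 2 (volume.restrict Ω)) :
    Integrable (fun x => ⟪v x, w x⟫) (volume.restrict Ω) := by
  refine Integrable.mono' (MemLp.integrable_mul hv.norm hw.norm) (hv.1.inner hw.1) ?_
  exact Eventually.of_forall (fun x => norm_inner_le_norm _ _)

lemma ipA_comb {Ω : Set (Euc N)} (M : Coeff N Ω) {v w z : Euc N → Euc N} (t : ℝ)
    (hv : MemLp v 2 (volume.restrict Ω)) (hw : MemLp w 2 (volume.restrict Ω))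
    (hz : MemLp z 2 (volume.restrict Ω)) :
    ipA Ω M.A (fun x => v x + t • w x) z = ipA Ω M.A v z + t * ipA Ω M.A w z := by
  unfold ipA
  rw [← integral_const_mul, ← integral_add (inner_int (A_memLp M hv) hz)
    ((inner_int (A_memLp M hw) hz).const_mul t)]
  congr 1; funext x
  simp [inner_add_left, real_inner_smul_left]

lemma ipA_symm {Ω : Set (Euc N)} (M : Coeff N Ω) (v w : Euc N → Euc N) :
    ipA Ω M.A v w = ipA Ω M.A w v := by
  unfold ipA
  congr 1; funext x
  rw [M.symm, real_inner_comm]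

lemma sqA_nonneg {Ω : Set (Euc N)} (M : Coeff N Ω) (v : Euc N → Euc N) :
    0 ≤ sqA Ω M.A v := by
  unfold sqA ipA
  apply integral_nonneg_of_ae
  filter_upwards [M.coer] with x hx
  exact le_trans (by positivity) (hx _)

lemma sqA_comb {Ω : Set (Euc N)} (M : Coeff N Ω) {v w : Euc N → Euc N} (t : ℝ)
    (hv : MemLp v 2 (volume.restrict Ω)) (hw : MemLp w 2 (volume.restrict Ω)) :
    sqA Ω M.A (fun x => v x + t • w x) =
      sqA Ω M.A v + 2 * t * ipA Ω M.A v w + t ^ 2 * sqA Ω M.A w := by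
  have hz : MemLp (fun x => v x + t • w x) 2 (volume.restrict Ω) := hv.add (hw.const_smul t)
  unfold sqA
  rw [ipA_comb M t hv hw hz, ipA_symm M v, ipA_symm M w, ipA_comb M t hv hw hv,
    ipA_comb M t hv hw hw, ipA_symm M w v]
  ring

lemma ipA_cs {Ω : Set (Euc N)} (M : Coeff N Ω) {v w : Euc N → Euc N}
    (hv : MemLp v 2 (volume.restrict Ω)) (hw : MemLp w 2 (volume.restrict Ω)) :
    |ipA Ω M.A v w| ≤ nrmA Ω M.A v * nrmA Ω M.A w := by
  apply cs_disc
  intro t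
  rw [← sqA_comb M t hv hw]
  exact sqA_nonneg M _

lemma nrmA_tri {Ω : Set (Euc N)} (M : Coeff N Ω) {v w : Euc N → Euc N}
    (hv : MemLp v 2 (volume.restrict Ω)) (hw : MemLp w 2 (volume.restrict Ω)) (t : ℝ)
    (ht : |t| = 1) :
    nrmA Ω M.A (fun x => v x + t • w x) ≤ nrmA Ω M.A v + nrmA Ω M.A w := by
  have h1 := ipA_cs M hv hw
  have ha : 0 ≤ nrmA Ω M.A v := Real.sqrt_nonneg _
  have hb : 0 ≤ nrmA Ω M.A w := Real.sqrt_nonneg _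
  have e1 : nrmA Ω M.A v ^ 2 = sqA Ω M.A v := Real.sq_sqrt (sqA_nonneg M v)
  have e2 : nrmA Ω M.A w ^ 2 = sqA Ω M.A w := Real.sq_sqrt (sqA_nonneg M w)
  apply Real.sqrt_le_iff.2 ⟨by positivity, ?_⟩
  rw [sqA_comb M t hv hw, ← e1, ← e2, ← sq_abs t, ht]
  have : t * ipA Ω M.A v w ≤ nrmA Ω M.A v * nrmA Ω M.A w := by
    refine (le_abs_self _).trans ?_
    rw [abs_mul, ht, one_mul]; exact h1
  nlinarith

/-- identity coefficient -/
def idC (N : ℕ) (Ω : Set (Euc N)) : Coeff N Ω where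
  A := fun _ => ContinuousLinearMap.id ℝ _
  α := 1
  α_pos := one_pos
  meas := fun ξ => aestronglyMeasurable_const
  bdd := ⟨1, Eventually.of_forall (fun x ξ => by simp)⟩
  symm := fun x ξ η => rfl
  coer := Eventually.of_forall (fun x ξ => by simp)

lemma sqL2V_eq (Ω : Set (Euc N)) (v : Euc N → Euc N) :
    sqL2V Ω 0 v = sqA Ω (idC N Ω).A v := by
  simp [sqL2V, sqA, ipA, idC]

lemma nrmL2V_eq (Ω : Set (Euc N)) (v : Euc N → Euc N) :
    nrmL2V Ω 0 v = nrmA Ω (idC N Ω).A v := by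
  simp [nrmL2V, nrmA, sqL2V_eq]

lemma nrmL2V_le {Ω : Set (Euc N)} (M : Coeff N Ω) {v : Euc N → Euc N}
    (hv : MemLp v 2 (volume.restrict Ω)) : nrmL2V Ω 0 v ≤ M.α * nrmA Ω M.A v := by
  have hα := M.α_pos
  have h0 : 0 ≤ nrmA Ω M.A v := Real.sqrt_nonneg _
  apply Real.sqrt_le_iff.2 ⟨by positivity, ?_⟩
  rw [mul_pow, nrmA, Real.sq_sqrt (sqA_nonneg M v), sqL2V_eq]
  unfold sqA ipA
  rw [← integral_const_mul]
  apply integral_mono_ae (inner_int (A_memLp (idC N Ω) hv) hv)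
    ((inner_int (A_memLp M hv) hv).const_mul _)
  filter_upwards [M.coer] with x hx
  have := mul_le_mul_of_nonneg_left (hx (v x)) (sq_nonneg M.α)
  simp only [idC, ContinuousLinearMap.id_apply, real_inner_self_eq_norm_sq]
  refine le_trans (le_of_eq ?_) this
  field_simp

lemma nrmA_le {Ω : Set (Euc N)} (M : Coeff N Ω) : ∃ K : ℝ, ∀ v : Euc N → Euc N,
    MemLp v 2 (volume.restrict Ω) → nrmA Ω M.A v ≤ K * nrmL2V Ω 0 v := by
  obtain ⟨C, hC⟩ := M.bdd
  refine ⟨Real.sqrt |C|, fun v hv => ?_⟩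
  unfold nrmA nrmL2V
  rw [← Real.sqrt_mul (abs_nonneg _)]
  apply Real.sqrt_le_sqrt
  rw [sqL2V_eq]
  unfold sqA ipA
  rw [← integral_const_mul]
  apply integral_mono_ae (inner_int (A_memLp M hv) hv)
    ((inner_int (A_memLp (idC N Ω) hv) hv).const_mul _)
  filter_upwards [hC] with x hx
  simp only [idC, ContinuousLinearMap.id_apply, real_inner_self_eq_norm_sq]
  refine (real_inner_le_norm _ _).trans ?_
  have h1 := hx (v x)
  have h2 := mul_le_mul_of_nonneg_right (le_abs_self C) (norm_nonneg (v x))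
  nlinarith [norm_nonneg (v x)]

lemma scal_cs {Ω : Set (Euc N)} {f g : Euc N → ℝ} (hf : MemL2 Ω 1 f) (hg : MemL2 Ω (-1) g) :
    Integrable (fun x => f x * g x) (volume.restrict Ω) ∧
    |∫ x in Ω, f x * g x| ≤ nrmL2 Ω 1 f * nrmL2 Ω (-1) g := by
  have hpos : ∀ x : Euc N, (0:ℝ) < 1 + ‖x‖ ^ 2 := fun x => by positivity
  have h1 : Integrable (fun x => f x * g x) (volume.restrict Ω) := by
    refine Integrable.mono' (hf.2.add hg.2) (hf.1.mul hg.1) (Eventually.of_forall fun x => ?_)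
    simp only [Pi.add_apply, Real.rpow_one, Real.rpow_neg_one, Real.norm_eq_abs]
    have := hpos x
    set a := 1 + ‖x‖ ^ 2
    have e : a * f x ^ 2 + a⁻¹ * g x ^ 2 = a⁻¹ * ((a * f x) ^ 2 + g x ^ 2) := by
      field_simp
    have e2 : |f x * g x| = a⁻¹ * (|a * f x| * |g x|) := by
      rw [abs_mul, abs_mul, abs_of_pos this]; field_simp
    rw [e, e2]
    apply mul_le_mul_of_nonneg_left _ (by positivity)
    rw [← sq_abs (a * f x), ← sq_abs (g x)]
    nlinarith [sq_nonneg (|a * f x| - |g x|), sq_nonneg (|a * f x|), sq_nonneg (|g x|)]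
  refine ⟨h1, cs_disc fun t => ?_⟩
  unfold sqL2
  have h2 : Integrable (fun x => (1 + ‖x‖ ^ 2) ^ (1:ℝ) * f x ^ 2 + 2 * t * (f x * g x))
      (volume.restrict Ω) := hf.2.add (h1.const_mul (2 * t))
  rw [← integral_const_mul, ← integral_const_mul, ← integral_add hf.2 (h1.const_mul _),
    ← integral_add h2 (hg.2.const_mul _)]
  apply integral_nonneg
  intro x
  simp only [Pi.add_apply, Pi.zero_apply, Real.rpow_one, Real.rpow_neg_one]
  have := hpos x
  set a := 1 + ‖x‖ ^ 2
  have e : a * f x ^ 2 + 2 * t * (f x * g x) + t ^ 2 * (a⁻¹ * g x ^ 2) =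
    a⁻¹ * (a * f x + t * g x) ^ 2 := by field_simp; ring
  rw [e]; positivity

lemma MemL2.add' {Ω : Set (Euc N)} {f g : Euc N → ℝ} (hf : MemL2 Ω 1 f) (hg : MemL2 Ω 1 g) :
    MemL2 Ω 1 (fun x => f x + g x) := by
  refine ⟨hf.1.add hg.1, ?_⟩
  have hm : Continuous fun x : Euc N => (1 + ‖x‖ ^ 2) ^ (1:ℝ) := by
    simp only [Real.rpow_one]; fun_prop
  refine Integrable.mono' ((hf.2.add hg.2).const_mul 2)
    (hm.aestronglyMeasurable.mul ((hf.1.add hg.1).pow 2)) (Eventually.of_forall fun x => ?_)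
  simp only [Pi.add_apply, Real.rpow_one, Real.norm_eq_abs]
  rw [abs_of_nonneg (by positivity)]
  have : (0:ℝ) < 1 + ‖x‖ ^ 2 := by positivity
  nlinarith [mul_nonneg this.le (sq_nonneg (f x - g x))]

lemma grad_cont {φ : Euc N → ℝ} (h : ContDiff ℝ (⊤ : ℕ∞) φ) : Continuous (gradient φ) := by
  have : Continuous (fderiv ℝ φ) := h.continuous_fderiv (by simp)
  exact (InnerProductSpace.toDual ℝ (Euc N)).symm.continuous.comp this

lemma norm_grad (φ : Euc N → ℝ) (x : Euc N) : ‖gradient φ x‖ = ‖fderiv ℝ φ x‖ := by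
  simp [gradient]

lemma grad_supp {φ : Euc N → ℝ} {x : Euc N} (hx : x ∉ tsupport φ) : gradient φ x = 0 := by
  have : fderiv ℝ φ x = 0 := by
    have := support_fderiv_subset ℝ (f := φ)
    by_contra h
    exact hx (this h)
  simp [gradient, this]

lemma grad_cs {φ : Euc N → ℝ} (h : HasCompactSupport φ) : HasCompactSupport (gradient φ) :=
  HasCompactSupport.intro h (fun _ hx => grad_supp hx)

lemma test_memLp {Ω : Set (Euc N)} {φ : Euc N → ℝ} (h : IsTest Ω φ) :
    MemLp (gradient φ) 2 (volume.restrict Ω) :=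
  ((grad_cont h.1).memLp_of_hasCompactSupport (grad_cs h.2.1)).restrict Ω

lemma test_memL2 {Ω : Set (Euc N)} {φ : Euc N → ℝ} (h : IsTest Ω φ) : MemL2 Ω (-1) φ := by
  have hc := h.1.continuous
  refine ⟨hc.aestronglyMeasurable, ?_⟩
  have : Integrable (fun x : Euc N => (1 + ‖x‖ ^ 2) ^ (-1:ℝ) * φ x ^ 2) volume := by
    apply Continuous.integrable_of_hasCompactSupport
    · simp only [Real.rpow_neg_one]
      have : ∀ x : Euc N, 1 + ‖x‖ ^ 2 ≠ 0 := fun x => by positivity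
      fun_prop (disch := assumption)
    · refine HasCompactSupport.intro h.2.1 (fun x hx => ?_)
      simp [image_eq_zero_of_notMem_tsupport hx]
  exact this.restrict

/-- weight component -/
def gi (i : Fin N) (x : Euc N) : ℝ := x i * (1 + ‖x‖ ^ 2)⁻¹

lemma gi_contDiff (i : Fin N) : ContDiff ℝ 1 (gi i) := by
  unfold gi
  have h0 : ∀ x : Euc N, 1 + ‖x‖ ^ 2 ≠ 0 := fun x => by positivity
  have h1 : ContDiff ℝ 1 (fun x : Euc N => x i) :=
    (EuclideanSpace.proj i : Euc N →L[ℝ] ℝ).contDiff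
  exact h1.mul ((contDiff_const.add (contDiff_norm_sq ℝ)).inv h0)

lemma gi_deriv (i : Fin N) (x : Euc N) :
    fderiv ℝ (gi i) x (EuclideanSpace.single i 1) =
      (1 + ‖x‖ ^ 2)⁻¹ - 2 * x i ^ 2 * ((1 + ‖x‖ ^ 2)⁻¹) ^ 2 := by
  have h0 : 1 + ‖x‖ ^ 2 ≠ 0 := by positivity
  have h1 : HasFDerivAt (fun x : Euc N => x i)
      (EuclideanSpace.proj i : Euc N →L[ℝ] ℝ) x :=
    (EuclideanSpace.proj i : Euc N →L[ℝ] ℝ).hasFDerivAt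
  have h2 : HasFDerivAt (fun x : Euc N => 1 + ‖x‖ ^ 2) (2 • (innerSL ℝ x)) x :=
    ((hasStrictFDerivAt_norm_sq x).hasFDerivAt).const_add 1
  have h3 := (hasDerivAt_inv h0).comp_hasFDerivAt x h2
  have h4 := h1.mul h3
  have h5 : HasFDerivAt (gi i) _ x := h4
  rw [h5.fderiv]
  simp [EuclideanSpace.inner_single_right]
  field_simp
  try ring

lemma hardy (hN : 3 ≤ N) {φ : Euc N → ℝ} (hφ : ContDiff ℝ (⊤ : ℕ∞) φ)
    (hc : HasCompactSupport φ) :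
    ∫ x, (1 + ‖x‖ ^ 2) ^ (-1:ℝ) * φ x ^ 2 ≤ (cN N) ^ 2 * ∫ x, ‖gradient φ x‖ ^ 2 := by
  have hφc := hφ.continuous
  have hD : Continuous (fderiv ℝ φ) := hφ.continuous_fderiv (by simp)
  have hd : Differentiable ℝ φ := hφ.differentiable (by simp)
  have h0 : ∀ x : Euc N, 1 + ‖x‖ ^ 2 ≠ 0 := fun x => by positivity
  have hz : ∀ x, x ∉ tsupport φ → φ x = 0 := fun x hx => image_eq_zero_of_notMem_tsupport hx
  have key : ∀ F : Euc N → ℝ, Continuous F → (∀ x, φ x = 0 → F x = 0) → Integrable F volume := by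
    intro F hF h
    exact hF.integrable_of_hasCompactSupport (HasCompactSupport.intro hc fun x hx => h x (hz x hx))
  have hsq : ∀ x (y : Euc N), fderiv ℝ (fun x => φ x ^ 2) x y = 2 * φ x * fderiv ℝ φ x y := by
    intro x y
    rw [((hd x).hasFDerivAt.pow 2).fderiv]
    simp
  have ibp : ∀ i : Fin N,
      ∫ x, φ x ^ 2 * ((1 + ‖x‖ ^ 2)⁻¹ - 2 * x i ^ 2 * ((1 + ‖x‖ ^ 2)⁻¹) ^ 2) =
      - ∫ x, 2 * φ x * fderiv ℝ φ x (EuclideanSpace.single i 1) * gi i x := by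
    intro i
    have hgd := (gi_contDiff (N := N) i).continuous_fderiv (by simp)
    have hgc := (gi_contDiff (N := N) i).continuous
    have := integral_mul_fderiv_eq_neg_fderiv_mul_of_integrable (μ := volume)
      (f := fun x => φ x ^ 2) (g := gi i) (v := EuclideanSpace.single i (1:ℝ))
      (by simp only [hsq]; exact key _ (by fun_prop) (by intro x hx; simp [hx]))
      (key _ (by fun_prop) (by intro x hx; simp [hx]))
      (key _ (by fun_prop) (by intro x hx; simp [hx]))
      (fun x _ => (hd x).pow 2)
      (fun x _ => (gi_contDiff i).differentiable (by simp) x)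
    simpa only [gi_deriv, hsq] using this
  have hsum : ∫ x, φ x ^ 2 * (N * (1 + ‖x‖ ^ 2)⁻¹ - 2 * ‖x‖ ^ 2 * ((1 + ‖x‖ ^ 2)⁻¹) ^ 2) =
      - ∫ x, 2 * φ x * fderiv ℝ φ x x * (1 + ‖x‖ ^ 2)⁻¹ := by
    have e := Finset.sum_congr rfl (fun i (_ : i ∈ (Finset.univ : Finset (Fin N))) => ibp i)
    rw [Finset.sum_neg_distrib, ← integral_finsetSum, ← integral_finsetSum] at e
    · refine Eq.trans (integral_congr_ae (Eventually.of_forall fun x => ?_))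
        (e.trans (congrArg Neg.neg (integral_congr_ae (Eventually.of_forall fun x => ?_))))
      · simp only []
        rw [← Finset.mul_sum, Finset.sum_sub_distrib, ← Finset.sum_mul, ← Finset.mul_sum,
          EuclideanSpace.real_norm_sq_eq]
        simp
      · simp only []
        have : fderiv ℝ φ x x = ∑ i, x i * fderiv ℝ φ x (EuclideanSpace.single i 1) := by
          generalize fderiv ℝ φ x = L
          conv_lhs => rw [← (EuclideanSpace.basisFun (Fin N) ℝ).sum_repr x]
          simp only [map_sum, map_smul]
          congr 1; funext i; simp
        rw [this, Finset.mul_sum, Finset.sum_mul]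
        symm
        refine Finset.sum_congr rfl fun i _ => ?_
        simp only [gi]; ring
    · intro i _
      have hgc := (gi_contDiff (N := N) i).continuous
      exact key _ (by fun_prop) (by intro x hx; simp [hx])
    · intro i _
      exact key _ (by fun_prop (disch := assumption)) (by intro x hx; simp [hx])
  have hgI : Integrable (fun x => ‖gradient φ x‖ ^ 2) volume := by
    apply Continuous.integrable_of_hasCompactSupport
    · have := grad_cont hφ
      fun_prop
    · exact HasCompactSupport.intro hc fun x hx => by simp [grad_supp hx]
  have hcpos : (0:ℝ) < N - 2 := by
    have : (3:ℝ) ≤ N := by exact_mod_cast hN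
    linarith
  have hc1 : cN N = 2 / ((N:ℝ) - 2) := rfl
  set c : ℝ := (N:ℝ) - 2 with hcdef
  have hWI : Integrable (fun x => (1 + ‖x‖ ^ 2)⁻¹ * φ x ^ 2) volume :=
    key _ (by fun_prop (disch := assumption)) (by intro x hx; simp [hx])
  have hI1 : Integrable (fun x => φ x ^ 2 * (N * (1 + ‖x‖ ^ 2)⁻¹ -
      2 * ‖x‖ ^ 2 * ((1 + ‖x‖ ^ 2)⁻¹) ^ 2)) volume :=
    key _ (by fun_prop (disch := assumption)) (by intro x hx; simp [hx])
  have hI2 : Integrable (fun x => 2 * φ x * fderiv ℝ φ x x * (1 + ‖x‖ ^ 2)⁻¹) volume :=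
    key _ (by fun_prop (disch := assumption)) (by intro x hx; simp [hx])
  have s1 : c * ∫ x, (1 + ‖x‖ ^ 2)⁻¹ * φ x ^ 2 ≤
      ∫ x, φ x ^ 2 * (N * (1 + ‖x‖ ^ 2)⁻¹ - 2 * ‖x‖ ^ 2 * ((1 + ‖x‖ ^ 2)⁻¹) ^ 2) := by
    rw [← integral_const_mul]
    apply integral_mono (hWI.const_mul c) hI1
    intro x
    have hp : (0:ℝ) < 1 + ‖x‖ ^ 2 := by positivity
    have hW : 0 < (1 + ‖x‖ ^ 2)⁻¹ := by positivity
    have hW1 : ‖x‖ ^ 2 * (1 + ‖x‖ ^ 2)⁻¹ = 1 - (1 + ‖x‖ ^ 2)⁻¹ := by field_simp; ring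
    set W := (1 + ‖x‖ ^ 2)⁻¹
    have e : φ x ^ 2 * (N * W - 2 * ‖x‖ ^ 2 * W ^ 2) = c * (W * φ x ^ 2) + 2 * φ x ^ 2 * W ^ 2 := by
      have : 2 * ‖x‖ ^ 2 * W ^ 2 = 2 * (1 - W) * W := by rw [← hW1]; ring
      rw [this, hcdef]; ring
    simp only []
    rw [e]
    have : 0 ≤ 2 * φ x ^ 2 * W ^ 2 := by positivity
    linarith
  have s2 : - ∫ x, 2 * φ x * fderiv ℝ φ x x * (1 + ‖x‖ ^ 2)⁻¹ ≤
      (c / 2) * (∫ x, (1 + ‖x‖ ^ 2)⁻¹ * φ x ^ 2) + (2 / c) * ∫ x, ‖gradient φ x‖ ^ 2 := by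
    rw [← integral_neg, ← integral_const_mul, ← integral_const_mul,
      ← integral_add (hWI.const_mul _) (hgI.const_mul _)]
    apply integral_mono hI2.neg ((hWI.const_mul _).add (hgI.const_mul _))
    intro x
    have hp : (0:ℝ) < 1 + ‖x‖ ^ 2 := by positivity
    have hW : 0 < (1 + ‖x‖ ^ 2)⁻¹ := by positivity
    have hW1 : ‖x‖ ^ 2 * (1 + ‖x‖ ^ 2)⁻¹ = 1 - (1 + ‖x‖ ^ 2)⁻¹ := by field_simp; ring
    have hb : |fderiv ℝ φ x x| ≤ ‖gradient φ x‖ * ‖x‖ := by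
      rw [norm_grad]; exact (fderiv ℝ φ x).le_opNorm x
    simp only [Pi.neg_apply, Pi.add_apply]
    set W := (1 + ‖x‖ ^ 2)⁻¹
    set G := ‖gradient φ x‖
    set d := fderiv ℝ φ x x
    have hd2 : d ^ 2 ≤ G ^ 2 * ‖x‖ ^ 2 := by
      rw [← sq_abs d, ← mul_pow]; exact pow_le_pow_left₀ (abs_nonneg _) hb 2
    have t1 : -(2 * φ x * d * W) ≤ W * (c / 2 * φ x ^ 2 + 2 / c * d ^ 2) := by
      have : c / 2 * φ x ^ 2 + 2 / c * d ^ 2 + 2 * φ x * d = 1 / (2 * c) * (c * φ x + 2 * d) ^ 2 := by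
        field_simp; ring
      have h2 : 0 ≤ 1 / (2 * c) * (c * φ x + 2 * d) ^ 2 := by positivity
      have h3 := mul_nonneg hW.le h2
      rw [← this] at h3
      linarith
    have t2 : W * d ^ 2 ≤ G ^ 2 := by
      calc W * d ^ 2 ≤ W * (G ^ 2 * ‖x‖ ^ 2) := mul_le_mul_of_nonneg_left hd2 hW.le
        _ = G ^ 2 * (1 - W) := by rw [← hW1]; ring
        _ ≤ G ^ 2 := by nlinarith [sq_nonneg G]
    have t3 := mul_le_mul_of_nonneg_left t2 (by positivity : 0 ≤ 2 / c)
    linarith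
  simp only [Real.rpow_neg_one]
  rw [hsum] at s1
  have s3 := s1.trans s2
  rw [hc1]
  set I := ∫ x, (1 + ‖x‖ ^ 2)⁻¹ * φ x ^ 2
  set J := ∫ x, ‖gradient φ x‖ ^ 2
  have s4 : c / 2 * I ≤ 2 / c * J := by linarith
  have s5 := mul_le_mul_of_nonneg_left s4 (by positivity : 0 ≤ 2 / c)
  have e1 : 2 / c * (c / 2 * I) = I := by field_simp
  rw [e1] at s5
  refine s5.trans (le_of_eq ?_)
  ring

lemma hardy_test (hN : 3 ≤ N) {Ω : Set (Euc N)} {φ : Euc N → ℝ} (h : IsTest Ω φ) :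
    nrmL2 Ω (-1) φ ≤ cN N * nrmL2V Ω 0 (gradient φ) := by
  have hc0 : 0 ≤ cN N := by
    have : (3:ℝ) ≤ N := by exact_mod_cast hN
    unfold cN
    apply div_nonneg <;> linarith
  have hn : 0 ≤ nrmL2V Ω 0 (gradient φ) := Real.sqrt_nonneg _
  apply Real.sqrt_le_iff.2 ⟨by positivity, ?_⟩
  have hnn : 0 ≤ sqL2V Ω 0 (gradient φ) := by
    apply integral_nonneg; intro x; simp
  rw [mul_pow, nrmL2V, Real.sq_sqrt hnn]
  have e1 : sqL2 Ω (-1) φ = ∫ x, (1 + ‖x‖ ^ 2) ^ (-1:ℝ) * φ x ^ 2 := by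
    apply setIntegral_eq_integral_of_forall_compl_eq_zero
    intro x hx
    simp [image_eq_zero_of_notMem_tsupport (fun h' => hx (h.2.2 h'))]
  have e2 : sqL2V Ω 0 (gradient φ) = ∫ x, ‖gradient φ x‖ ^ 2 := by
    simp only [sqL2V, Real.rpow_zero, one_mul]
    apply setIntegral_eq_integral_of_forall_compl_eq_zero
    intro x hx
    simp [grad_supp (fun h' => hx (h.2.2 h'))]
  rw [e1, e2]
  exact hardy hN h.1 h.2.1

/-- Weaker non-conforming upper bound via the triangle inequality:
`‖E‖²_A ≤ (1 + 4/θ) M₊² + (4 + θ) M̃₊²` for every `θ > 0`. -/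
theorem stmt_18 (Ω : Set (Euc N)) (hΩ : IsOpen Ω) (hN : 3 ≤ N) (M : Coeff N Ω)
    (f : Euc N → ℝ) (hf : MemL2 Ω 1 f)
    (uh : Euc N → ℝ) (gu : Euc N → Euc N)
    (huh : MemL2 Ω (-1) uh) (hgu : MemL2V Ω 0 gu) (hguw : IsWeakGrad Ω uh gu)
    (hweak : ∀ φ : Euc N → ℝ, IsTest Ω φ →
      (∫ x in Ω, ⟪M.A x (gu x), gradient φ x⟫) = ∫ x in Ω, f x * φ x)
    (vt : Euc N → Euc N) (hvt : MemL2V Ω 0 vt)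
    (wt : Euc N → Euc N) (hwt : IsAInv Ω M.A vt wt) :
    ∀ θ : ℝ, 0 < θ →
    ∀ (v : Euc N → Euc N) (dv : Euc N → ℝ) (w : Euc N → Euc N),
      MemL2V Ω 0 v → MemL2 Ω 1 dv → IsWeakDiv Ω v dv → IsAInv Ω M.A v w →
    ∀ (u : Euc N → ℝ) (gu' : Euc N → Euc N),
      MemL2 Ω (-1) u → MemL2V Ω 0 gu' → IsWeakGrad Ω u gu' →
      MemH10 Ω (fun x => uh x - u x) (fun x => gu x - gu' x) →
      sqA Ω M.A (fun x => gu x - wt x) ≤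
        (1 + 4 / θ) * (M.α * cN N * nrmL2 Ω 1 (fun x => f x + dv x) +
            nrmA Ω M.A (fun x => wt x - w x)) ^ 2 +
          (4 + θ) * sqA Ω M.A (fun x => gu' x - wt x) := by
  intro θ hθ v dv w hv hdv hdiv hw u gu' hu hgu' hgw' hH
  obtain ⟨-, hg, -, φ, hφ, -, hlim⟩ := hH
  rw [memV_iff] at hgu hvt hv hgu' hg
  have hwt1 := memV_iff.1 hwt.1
  have hw1 := memV_iff.1 hw.1
  set g : Euc N → Euc N := fun x => gu x - gu' x with hgdef
  have hfd := MemL2.add' hf hdv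
  have hE : MemLp (fun x => gu x + (-1:ℝ) • w x) 2 (volume.restrict Ω) :=
    hgu.add (hw1.const_smul (-1:ℝ))
  set k := cN N * nrmL2 Ω 1 (fun x => f x + dv x) with hk
  have hc0 : 0 ≤ cN N := by
    have : (3:ℝ) ≤ N := by exact_mod_cast hN
    unfold cN
    apply div_nonneg <;> linarith
  have hk0 : 0 ≤ k := mul_nonneg hc0 (Real.sqrt_nonneg _)
  have htest : ∀ n, |ipA Ω M.A (fun x => gu x + (-1:ℝ) • w x) (gradient (φ n))| ≤
      k * nrmL2V Ω 0 (gradient (φ n)) := by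
    intro n
    have hT := test_memLp (hφ n)
    have hL := test_memL2 (hφ n)
    have e : ipA Ω M.A (fun x => gu x + (-1:ℝ) • w x) (gradient (φ n)) =
        ∫ x in Ω, (f x + dv x) * φ n x := by
      rw [ipA_comb M _ hgu hw1 hT]
      have e1 : ipA Ω M.A w (gradient (φ n)) = ∫ x in Ω, ⟪v x, gradient (φ n) x⟫ := by
        apply integral_congr_ae
        filter_upwards [hw.2] with x hx
        rw [hx]
      rw [e1, hdiv _ (hφ n)]
      unfold ipA
      rw [hweak _ (hφ n)]
      simp only [add_mul]
      rw [integral_add (scal_cs hf hL).1 (scal_cs hdv hL).1]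
      ring
    rw [e]
    refine (scal_cs hfd hL).2.trans ?_
    have := mul_le_mul_of_nonneg_left (hardy_test hN (hφ n))
      (Real.sqrt_nonneg (sqL2 Ω 1 (fun x => f x + dv x)))
    calc _ ≤ _ := this
      _ = _ := by rw [hk, nrmL2]; ring
  obtain ⟨K, hK⟩ := nrmA_le M
  set S := nrmA Ω M.A (fun x => gu x + (-1:ℝ) • w x) with hS
  have hS0 : 0 ≤ S := Real.sqrt_nonneg _
  have hbound : |ipA Ω M.A (fun x => gu x + (-1:ℝ) • w x) g| ≤ k * nrmL2V Ω 0 g := by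
    have hle : ∀ n, |ipA Ω M.A (fun x => gu x + (-1:ℝ) • w x) g| ≤
        k * nrmL2V Ω 0 g + (k + S * K) * nrmL2V Ω 0 (fun x => g x - gradient (φ n) x) := by
      intro n
      have hT := test_memLp (hφ n)
      set r : Euc N → Euc N := fun x => g x - gradient (φ n) x with hr
      have hrm : MemLp r 2 (volume.restrict Ω) := hg.sub hT
      have hsplit : g = fun x => gradient (φ n) x + (1:ℝ) • r x := by
        funext x; simp [hr]
      have hsplit2 : gradient (φ n) = fun x => g x + (-1:ℝ) • r x := by
        funext x; simp [hr]
      have a1 : ipA Ω M.A (fun x => gu x + (-1:ℝ) • w x) g =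
          ipA Ω M.A (fun x => gu x + (-1:ℝ) • w x) (gradient (φ n)) +
          ipA Ω M.A (fun x => gu x + (-1:ℝ) • w x) r := by
        rw [ipA_symm M _ g, hsplit, ipA_comb M _ hT hrm hE, ipA_symm M _ (gradient (φ n)),
          ipA_symm M _ r, one_mul]
      have a2 := htest n
      have a3 : nrmL2V Ω 0 (gradient (φ n)) ≤ nrmL2V Ω 0 g + nrmL2V Ω 0 r := by
        rw [nrmL2V_eq, nrmL2V_eq, nrmL2V_eq]
        conv_lhs => rw [hsplit2]
        exact nrmA_tri (idC N Ω) hg hrm (-1) (by simp)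
      have a4 := ipA_cs M hE hrm
      have a5 := mul_le_mul_of_nonneg_left (hK r hrm) hS0
      have a6 := mul_le_mul_of_nonneg_left a3 hk0
      rw [a1]
      refine (abs_add_le _ _).trans ?_
      rw [← hS] at a4
      linarith
    have hl : Tendsto (fun n => k * nrmL2V Ω 0 g +
        (k + S * K) * nrmL2V Ω 0 (fun x => g x - gradient (φ n) x)) atTop
        (𝓝 (k * nrmL2V Ω 0 g + (k + S * K) * 0)) :=
      tendsto_const_nhds.add (hlim.const_mul _)
    have := ge_of_tendsto' hl hle
    simpa using this
  -- algebra
  have hE1 : MemLp (fun x => gu x - wt x) 2 (volume.restrict Ω) := hgu.sub hwt1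
  have hh : MemLp (fun x => gu' x - wt x) 2 (volume.restrict Ω) := hgu'.sub hwt1
  have hd : MemLp (fun x => wt x - w x) 2 (volume.restrict Ω) := hwt1.sub hw1
  set a := nrmA Ω M.A (fun x => gu' x - wt x) with ha
  set b := nrmA Ω M.A (fun x => wt x - w x) with hb
  set G := nrmA Ω M.A g with hG
  have ha0 : 0 ≤ a := Real.sqrt_nonneg _
  have hb0 : 0 ≤ b := Real.sqrt_nonneg _
  have hG0 : 0 ≤ G := Real.sqrt_nonneg _
  have hG2 : G ^ 2 = sqA Ω M.A g := Real.sq_sqrt (sqA_nonneg M _)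
  have ha2 : a ^ 2 = sqA Ω M.A (fun x => gu' x - wt x) := Real.sq_sqrt (sqA_nonneg M _)
  have hE2 : nrmA Ω M.A (fun x => gu x - wt x) ^ 2 = sqA Ω M.A (fun x => gu x - wt x) :=
    Real.sq_sqrt (sqA_nonneg M _)
  have hEe : (fun x => gu x - wt x) = fun x => g x + (1:ℝ) • (gu' x - wt x) := by
    funext x; simp [hgdef]
  have htri : nrmA Ω M.A (fun x => gu x - wt x) ≤ G + a := by
    rw [hEe]; exact nrmA_tri M hg hh 1 (by simp)
  have i1 : sqA Ω M.A g = ipA Ω M.A (fun x => gu x + (-1:ℝ) • w x) g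
      - ipA Ω M.A (fun x => wt x - w x) g - ipA Ω M.A (fun x => gu' x - wt x) g := by
    have e1 : (fun x => gu x + (-1:ℝ) • w x) =
        fun x => (g x + (1:ℝ) • (gu' x - wt x)) + (1:ℝ) • (wt x - w x) := by
      funext x; simp only [hgdef, one_smul, neg_smul]; abel
    rw [e1, ipA_comb M 1 (hEe ▸ hE1) hd hg, ipA_comb M 1 hg hh hg]
    unfold sqA; ring
  set m := M.α * k + b with hm
  have hα := M.α_pos
  have hm0 : 0 ≤ m := by positivity
  have j1 := ipA_cs M hd hg
  have j2 := ipA_cs M hh hg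
  have j3 := mul_le_mul_of_nonneg_left (nrmL2V_le M hg) hk0
  rw [← hb, ← hG] at j1
  rw [← ha, ← hG] at j2
  rw [← hG] at j3
  have hGle : G ≤ m + a := by
    have : G * G ≤ (m + a) * G := by
      have l1 := le_abs_self (ipA Ω M.A (fun x => gu x + (-1:ℝ) • w x) g)
      have l2 := neg_abs_le (ipA Ω M.A (fun x => wt x - w x) g)
      have l3 := neg_abs_le (ipA Ω M.A (fun x => gu' x - wt x) g)
      have : (m + a) * G = k * (M.α * G) + b * G + a * G := by rw [hm]; ring
      rw [this]
      nlinarith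
    by_contra hcon
    push Not at hcon
    nlinarith
  have hfin : nrmA Ω M.A (fun x => gu x - wt x) ≤ m + 2 * a := by linarith
  have hsq := pow_le_pow_left₀ (Real.sqrt_nonneg _ : 0 ≤ nrmA Ω M.A (fun x => gu x - wt x)) hfin 2
  change nrmA Ω M.A (fun x => gu x - wt x) ^ 2 ≤ _ at hsq
  rw [hE2] at hsq
  have hmeq : M.α * cN N * nrmL2 Ω 1 (fun x => f x + dv x) + b = m := by rw [hm, hk]; ring
  rw [hmeq, ← ha2]
  refine hsq.trans ?_
  have : (1 + 4 / θ) * m ^ 2 + (4 + θ) * a ^ 2 - (m + 2 * a) ^ 2 = 1 / θ * (2 * m - θ * a) ^ 2 := by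
    field_simp; ring
  have : 0 ≤ 1 / θ * (2 * m - θ * a) ^ 2 := by positivity
  linarith
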